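/- Let n be a positive integer and let F be a field that is an algebraic extension of a prime field of characteristic p, where p is an odd rational prime with gcd(n,p) ≠ 1 (equivalently, p divides n). Then the group algebra F V_{8n} has a non-zero outer derivation; that is, there exists a derivation d of F V_{8n} such that there is no β ∈ F V_{8n} with d(α) = αβ − βα for all α ∈ F V_{8n}. -/

import Mathlib

/-- The relators of the presentation
`V_{8n} = ⟨a, b ∣ a^{2n} = b⁴ = 1, (ba)² = 1, (b⁻¹a)² = 1⟩`,
where `a` is the generator indexed by `0` and `b` the one indexed by `1`.
(The relations `ba = a⁻¹b⁻¹` and `b⁻¹a = a⁻¹b` are equivalent to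
`(ba)² = 1` and `(b⁻¹a)² = 1` respectively.) -/
def V8nRels (n : ℕ) : Set (FreeGroup (Fin 2)) :=
  {(FreeGroup.of 0) ^ (2 * n), (FreeGroup.of 1) ^ 4,
   (FreeGroup.of 1 * FreeGroup.of 0) ^ 2,
   ((FreeGroup.of 1)⁻¹ * FreeGroup.of 0) ^ 2}

/-- The group `V_{8n}` of order `8n`. -/
abbrev V8n (n : ℕ) : Type := PresentedGroup (V8nRels n)

/-- The generator `a` of `V_{8n}`. -/
def aV (n : ℕ) : V8n n := PresentedGroup.of 0

/-- The generator `b` of `V_{8n}`. -/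
def bV (n : ℕ) : V8n n := PresentedGroup.of 1

/-!
Let `χ : G → R` be multiplicative, let `l : G → R` satisfy `l (g h) = l g χ(h) + l h`, and let
`w ∈ R[G]` satisfy `w g = χ(g) g w` for all `g ∈ G`. Then `g ↦ l(g) g w` extends to a derivation
of `R[G]`.

In `V_{8n}`, conjugation by `b` swaps `a` and `a⁻¹b²`, so `w = a - a⁻¹b²` commutes with `a` and
anticommutes with `b`. The quotient `D_{2n}` of `V_{8n}` supplies the matching sign `χ` and, for
every `c ∈ R` with `2n c = 0`, a function `l` with `l(a) = c` and `l(b) = 0`. The resulting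
derivation sends `a` to `c (a² - b²)`. As `b²` commutes with `a`, its coefficient in any commutator
`aβ - βa` vanishes; its coefficient in `c (a² - b²)` is `-c`, because `a² ≠ b²`: in the dihedral
quotient of order `8` where `a` becomes a reflection and `b` a rotation of order `4`, `a²` is
trivial but `b²` is not.
-/

section TwistedDerivation

open MonoidAlgebra

theorem leibniz_of_span_eq_top {R A : Type*} [CommSemiring R] [NonUnitalNonAssocSemiring A]
    [Module R A] [SMulCommClass R A A] [IsScalarTower R A A] {s : Set A}
    (hs : Submodule.span R s = ⊤) (d : A →ₗ[R] A)
    (h : ∀ x ∈ s, ∀ y ∈ s, d (x * y) = d x * y + x * d y) (x y : A) :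
    d (x * y) = d x * y + x * d y := by
  have bilinear : (LinearMap.mul R A).compr₂ d =
      (LinearMap.mul R A).comp d + (LinearMap.mul R A).compl₂ d :=
    LinearMap.ext_on hs fun x hx ↦ LinearMap.ext_on hs fun y hy ↦ h x hx y hy
  exact LinearMap.congr_fun₂ bilinear x y

variable {R G : Type*} [CommSemiring R]

/-- The linear endomorphism of `R[G]` sending `g ∈ G` to `l(g) g w`. It is a derivation when `l`
and `w` are twisted by a common character of `G`, see `twistedDerivation_mul`. -/
noncomputable def twistedDerivation [MulOneClass G] (l : G → R) (w : MonoidAlgebra R G) :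
    MonoidAlgebra R G →ₗ[R] MonoidAlgebra R G :=
  (MonoidAlgebra.basis G R).constr R fun g ↦ l g • (of R G g * w)

theorem twistedDerivation_of [MulOneClass G] (l : G → R) (w : MonoidAlgebra R G) (g : G) :
    twistedDerivation l w (of R G g) = l g • (of R G g * w) :=
  (MonoidAlgebra.basis G R).constr_basis R _ g

theorem twistedDerivation_mul [Monoid G] {l χ : G → R} {w : MonoidAlgebra R G}
    (hl : ∀ g h, l (g * h) = l g * χ h + l h)
    (hw : ∀ g, SemiconjBy w (of R G g) (χ g • of R G g)) (x y : MonoidAlgebra R G) :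
    twistedDerivation l w (x * y) = twistedDerivation l w x * y + x * twistedDerivation l w y := by
  refine leibniz_of_span_eq_top (MonoidAlgebra.basis G R).span_eq _ ?_ x y
  rintro _ ⟨g, rfl⟩ _ ⟨h, rfl⟩
  change twistedDerivation l w (of R G g * of R G h) =
    twistedDerivation l w (of R G g) * of R G h + of R G g * twistedDerivation l w (of R G h)
  rw [← map_mul, twistedDerivation_of, twistedDerivation_of, twistedDerivation_of, hl, map_mul]
  calc (l g * χ h + l h) • (of R G g * of R G h * w)
      = l g • (of R G g * (χ h • of R G h * w)) + l h • (of R G g * of R G h * w) := by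
        rw [add_smul, mul_smul, smul_mul_assoc, mul_smul_comm, mul_assoc]
    _ = l g • (of R G g * w) * of R G h + of R G g * l h • (of R G h * w) := by
        rw [← (hw h).eq, smul_mul_assoc, mul_smul_comm, mul_assoc, mul_assoc]

theorem coeff_of_mul_eq_coeff_mul_of [Group G] {g z : G} (h : Commute g z)
    (x : MonoidAlgebra R G) : (of R G g * x).coeff z = (x * of R G g).coeff z := by
  simp [h.inv_left.eq]

end TwistedDerivation

theorem semiconjBy_of_closure_eq_top {G M : Type*} [Group G] [Monoid M] {S : Set G}
    (hS : Subgroup.closure S = ⊤) {φ ψ : G →* M} {w : M}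
    (h : ∀ s ∈ S, SemiconjBy w (φ s) (ψ s)) (g : G) : SemiconjBy w (φ g) (ψ g) := by
  induction hS ▸ Subgroup.mem_top g using Subgroup.closure_induction with
  | mem s hs => exact h s hs
  | one => simp
  | mul x y _ _ hx hy => simpa using hx.mul_right hy
  | inv x _ hx => exact SemiconjBy.units_inv_right (x := φ.toHomUnits x) (y := ψ.toHomUnits x) hx

theorem exists_zmod_addMonoidHom_one_eq {A : Type*} [AddGroup A] {m : ℕ} {x : A}
    (hx : m • x = 0) : ∃ ρ : ZMod m →+ A, ρ 1 = x :=
  let f : {f : ℤ →+ A // f m = 0} := ⟨zmultiplesHom A x, by simpa using hx⟩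
  ⟨ZMod.lift m f, by simpa [f] using ZMod.lift_coe m f 1⟩

section Dihedral

open DihedralGroup

/-- The character of the dihedral group that is `1` on rotations and `-1` on reflections, with
values in an arbitrary ring `R`. -/
def dihedralSign (R : Type*) [Ring R] (m : ℕ) : DihedralGroup m →* R where
  toFun
    | r _ => 1
    | sr _ => -1
  map_one' := rfl
  map_mul' := by rintro (i | i) (j | j) <;> simp

variable {R : Type*} [Ring R] {m : ℕ}

@[simp]
theorem dihedralSign_r (i : ZMod m) : dihedralSign R m (r i) = 1 := rfl

@[simp]
theorem dihedralSign_sr (i : ZMod m) : dihedralSign R m (sr i) = -1 := rfl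

/-- The crossed homomorphism `r i, sr i ↦ ρ i` on the dihedral group, relative to
`dihedralSign R m`. -/
def dihedralCocycle (ρ : ZMod m →+ R) : DihedralGroup m → R
  | r i => ρ i
  | sr i => ρ i

theorem dihedralCocycle_mul (ρ : ZMod m →+ R) (g h : DihedralGroup m) :
    dihedralCocycle ρ (g * h) = dihedralCocycle ρ g * dihedralSign R m h + dihedralCocycle ρ h := by
  rcases g with i | i <;> rcases h with j | j <;>
    simp [dihedralCocycle, sub_eq_neg_add]

end Dihedral

section Relations

variable {G : Type*} [Group G] {a b : G}

theorem semiconjBy_inv_mul_sq (hb : b ^ 4 = 1) (hba : (b * a) ^ 2 = 1) :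
    SemiconjBy b a (a⁻¹ * b ^ 2) := by
  have b_inv : b⁻¹ = b ^ 3 := inv_eq_of_mul_eq_one_right (by rw [← hb]; group)
  calc b * a = a⁻¹ * b⁻¹ := by
        rw [← mul_inv_rev]; exact eq_inv_of_mul_eq_one_left (by rw [← hba, sq])
    _ = a⁻¹ * b ^ 2 * b := by rw [b_inv, pow_succ, mul_assoc]

theorem semiconjBy_inv_mul_sq_symm (hb : b ^ 4 = 1) (hba' : (b⁻¹ * a) ^ 2 = 1) :
    SemiconjBy b (a⁻¹ * b ^ 2) a := by
  have inv_sq : b⁻¹ ^ 2 = b ^ 2 := by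
    rw [inv_pow]; exact inv_eq_of_mul_eq_one_right (by rw [← pow_add, hb])
  have h := (semiconjBy_inv_mul_sq (by rw [inv_pow, hb, inv_one]) hba').inv_symm_left
  rwa [inv_inv, inv_sq] at h

theorem commute_sq_of_mul_sq_eq_one (hb : b ^ 4 = 1) (hba : (b * a) ^ 2 = 1)
    (hba' : (b⁻¹ * a) ^ 2 = 1) : Commute a (b ^ 2) := by
  rw [sq]
  exact ((semiconjBy_inv_mul_sq_symm hb hba').mul_left (semiconjBy_inv_mul_sq hb hba)).symm

end Relations

namespace V8n

section Presentation

variable (n : ℕ)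

theorem b_pow_four : bV n ^ 4 = 1 :=
  PresentedGroup.one_of_mem (rels := V8nRels n) (x := .of 1 ^ 4) (by simp [V8nRels])

theorem b_mul_a_sq : (bV n * aV n) ^ 2 = 1 :=
  PresentedGroup.one_of_mem (rels := V8nRels n) (x := (.of 1 * .of 0) ^ 2) (by simp [V8nRels])

theorem b_inv_mul_a_sq : ((bV n)⁻¹ * aV n) ^ 2 = 1 :=
  PresentedGroup.one_of_mem (rels := V8nRels n) (x := ((.of 1)⁻¹ * .of 0) ^ 2)
    (by simp [V8nRels])

theorem commute_a_b_sq : Commute (aV n) (bV n ^ 2) :=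
  commute_sq_of_mul_sq_eq_one (b_pow_four n) (b_mul_a_sq n) (b_inv_mul_a_sq n)

theorem closure_a_b : Subgroup.closure {aV n, bV n} = ⊤ := by
  rw [← PresentedGroup.closure_range_of (V8nRels n)]
  congr
  ext
  simp [Fin.exists_fin_two, aV, bV, eq_comm]

variable {n} {G : Type*} [Group G] {x y : G}

/-- The homomorphism `V_{8n} → G` sending `a` to `x` and `b` to `y`, for `x` and `y` satisfying
the relations. -/
def lift (hx : x ^ (2 * n) = 1) (hy : y ^ 4 = 1) (hyx : (y * x) ^ 2 = 1)
    (hyx' : (y⁻¹ * x) ^ 2 = 1) : V8n n →* G :=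
  PresentedGroup.toGroup (f := ![x, y]) (by rintro _ (rfl | rfl | rfl | rfl) <;> simpa)

variable (hx : x ^ (2 * n) = 1) (hy : y ^ 4 = 1) (hyx : (y * x) ^ 2 = 1)
  (hyx' : (y⁻¹ * x) ^ 2 = 1)

theorem lift_a : lift hx hy hyx hyx' (aV n) = x := PresentedGroup.toGroup.of _

theorem lift_b : lift hx hy hyx hyx' (bV n) = y := PresentedGroup.toGroup.of _

end Presentation

theorem a_sq_ne_b_sq (n : ℕ) : aV n ^ 2 ≠ bV n ^ 2 := by
  let φ : V8n n →* DihedralGroup 4 :=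
    lift (x := .sr 0) (y := .r 1) (by rw [pow_mul]; simp [sq]) (by decide) (by decide) (by decide)
  have φ_ne : φ (aV n ^ 2) ≠ φ (bV n ^ 2) := by
    simp only [map_pow, φ, lift_a, lift_b]
    decide
  exact ne_of_apply_ne φ φ_ne

/-- The homomorphism from `V_{8n}` to the dihedral group `D_{2n}` sending the generators `a` and `b`
to a generating rotation and a reflection. -/
def toDihedral (n : ℕ) : V8n n →* DihedralGroup (2 * n) :=
  lift (x := .r 1) (y := .sr 0) (by simp) (by simp [pow_succ]) (by simp [sq]) (by simp [sq])

theorem toDihedral_a (n : ℕ) : toDihedral n (aV n) = .r 1 := lift_a ..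

theorem toDihedral_b (n : ℕ) : toDihedral n (bV n) = .sr 0 := lift_b ..

section GroupAlgebra

open MonoidAlgebra

/-- The element `a - a⁻¹b²` of the group algebra of `V_{8n}`, which commutes with `a` and
anticommutes with `b`. -/
noncomputable def skewElement (R : Type*) [Ring R] (n : ℕ) : MonoidAlgebra R (V8n n) :=
  of R _ (aV n) - of R _ ((aV n)⁻¹ * bV n ^ 2)

theorem commute_skewElement_a (R : Type*) [Ring R] (n : ℕ) :
    Commute (skewElement R n) (of R _ (aV n)) :=
  .sub_left (.refl _)
    (((Commute.refl (aV n)).inv_left.mul_left (commute_a_b_sq n).symm).map (of R _))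

theorem semiconjBy_skewElement_b (R : Type*) [Ring R] (n : ℕ) :
    SemiconjBy (skewElement R n) (of R _ (bV n)) (-of R _ (bV n)) := by
  have swap := (semiconjBy_inv_mul_sq (b_pow_four n) (b_mul_a_sq n)).map (of R _)
  have swap' := (semiconjBy_inv_mul_sq_symm (b_pow_four n) (b_inv_mul_a_sq n)).map (of R _)
  simp only [SemiconjBy, skewElement, sub_mul, neg_mul, mul_sub, swap.eq, swap'.eq]
  abel

variable (R : Type*) [CommRing R] (n : ℕ)

theorem semiconjBy_skewElement_of (g : V8n n) :
    SemiconjBy (skewElement R n) (of R _ g)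
      (dihedralSign R (2 * n) (toDihedral n g) • of R _ g) := by
  let ψ : V8n n →* MonoidAlgebra R (V8n n) :=
    smulMonoidHom.comp (((dihedralSign R (2 * n)).comp (toDihedral n)).prod (of R _))
  refine semiconjBy_of_closure_eq_top (closure_a_b n) (ψ := ψ) ?_ g
  rintro _ (rfl | rfl)
  · simpa [ψ, toDihedral_a] using (commute_skewElement_a R n).semiconjBy
  · simpa [ψ, toDihedral_b] using semiconjBy_skewElement_b R n

variable {R n}

/-- The derivation of `R[V_{8n}]` sending `a` to `ρ(1) (a² - b²)` and `b` to `0`. -/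
noncomputable def dihedralDerivation (ρ : ZMod (2 * n) →+ R) :
    MonoidAlgebra R (V8n n) →ₗ[R] MonoidAlgebra R (V8n n) :=
  twistedDerivation (dihedralCocycle ρ ∘ toDihedral n) (skewElement R n)

theorem dihedralDerivation_mul (ρ : ZMod (2 * n) →+ R) (x y : MonoidAlgebra R (V8n n)) :
    dihedralDerivation ρ (x * y) = dihedralDerivation ρ x * y + x * dihedralDerivation ρ y :=
  twistedDerivation_mul (fun g h ↦ by simp [dihedralCocycle_mul])
    (semiconjBy_skewElement_of R n) x y

theorem dihedralDerivation_a (ρ : ZMod (2 * n) →+ R) :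
    dihedralDerivation ρ (of R _ (aV n)) = ρ 1 • (of R _ (aV n ^ 2) - of R _ (bV n ^ 2)) := by
  rw [dihedralDerivation, twistedDerivation_of, Function.comp_apply, toDihedral_a, skewElement,
    mul_sub, ← map_mul, ← map_mul, mul_inv_cancel_left, ← sq, dihedralCocycle]

theorem coeff_dihedralDerivation_a (ρ : ZMod (2 * n) →+ R) :
    (dihedralDerivation ρ (of R _ (aV n))).coeff (bV n ^ 2) = -ρ 1 := by
  rw [dihedralDerivation_a]
  simp [Finsupp.single_eq_of_ne' (a_sq_ne_b_sq n)]

theorem dihedralDerivation_not_inner {ρ : ZMod (2 * n) →+ R} (hρ : ρ 1 ≠ 0) :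
    ¬ ∃ β, ∀ α, dihedralDerivation ρ α = α * β - β * α := by
  rintro ⟨β, inner⟩
  have coeff_eq_zero : (dihedralDerivation ρ (of R _ (aV n))).coeff (bV n ^ 2) = 0 := by
    rw [inner, coeff_sub, Finsupp.sub_apply, coeff_of_mul_eq_coeff_mul_of (commute_a_b_sq n),
      sub_self]
  rw [coeff_dihedralDerivation_a, neg_eq_zero] at coeff_eq_zero
  exact hρ coeff_eq_zero

end GroupAlgebra

end V8n

theorem exists_outer_derivation_V8n_general (n : ℕ) {R : Type*} [CommRing R] {c : R} (hc : c ≠ 0)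
    (torsion : (2 * n) • c = 0) :
    ∃ d : MonoidAlgebra R (V8n n) →ₗ[R] MonoidAlgebra R (V8n n),
      (∀ x y, d (x * y) = d x * y + x * d y) ∧
      ¬ ∃ β : MonoidAlgebra R (V8n n), ∀ α, d α = α * β - β * α := by
  obtain ⟨ρ, rfl⟩ := exists_zmod_addMonoidHom_one_eq torsion
  exact ⟨V8n.dihedralDerivation ρ, V8n.dihedralDerivation_mul ρ,
    V8n.dihedralDerivation_not_inner hc⟩

/-- Let `F` be an algebraic extension of a prime field of
characteristic `p`, `p` an odd prime with `p ∣ n`. Then `F V_{8n}` has a non-zero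
outer derivation: a derivation which is not of the form `α ↦ α * β - β * α`. -/
theorem exists_outer_derivation_V8n (n : ℕ) (hn : 0 < n) (F : Type*) [Field F]
    (halg : ∀ x : F, IsAlgebraic (⊥ : Subfield F) x)
    (p : ℕ) (hp : p.Prime) (hodd : Odd p) (hdvd : p ∣ n) (hcharp : CharP F p) :
    ∃ d : MonoidAlgebra F (V8n n) → MonoidAlgebra F (V8n n),
      (∀ x y, d (x + y) = d x + d y) ∧
      (∀ x y, d (x * y) = d x * y + x * d y) ∧
      ¬ ∃ β : MonoidAlgebra F (V8n n), ∀ α, d α = α * β - β * α := by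
  obtain ⟨d, leibniz, outer⟩ := exists_outer_derivation_V8n_general n (one_ne_zero (α := F))
    (by rw [nsmul_one, CharP.cast_eq_zero_iff F p]; exact hdvd.mul_left 2)
  exact ⟨d, map_add d, leibniz, outer⟩
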